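/- If the global objective is a sum of local terms, P s = Σ_{j ∈ J} f j s, where each f j depends only on the coordinates in A j, and each player's local profit collects exactly the terms that involve that player, θ i s = Σ_{j : i ∈ A j} f j s, then the exact potential equality holds: for every player i, every profile s, and every strategy x ∈ S i, P (Function.update s i x) - P s = θ i (Function.update s i x) - θ i s. (This is equation (10) of the paper, establishing that the local profit functions together with the global objective form an exact potential game.) -/

import Mathlib

/-! The terms not involving player `i` make up `P - θ i`, so this difference is unaffected by
a unilateral deviation of `i`: the deviation changes `P` and `θ i` by the same amount. -/

open Finset Function

section ExactPotential

variable {ι J M : Type*} {S : ι → Type*}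

lemma dependsOn_compl_singleton_iff {β : Type*} [DecidableEq ι] {g : (∀ i, S i) → β} {i : ι} :
    DependsOn g {i}ᶜ ↔ ∀ s x, g (update s i x) = g s := by
  refine ⟨fun hg s x ↦ hg fun k hk ↦ update_of_ne hk x s, fun hg s s' hss' ↦ ?_⟩
  have hs' : update s i (s' i) = s' := update_eq_iff.2 ⟨rfl, fun k hk ↦ hss' k hk⟩
  rw [← hs', hg]

lemma dependsOn_sum [AddCommMonoid M] {t : Finset J} {f : J → (∀ i, S i) → M} {B : Set ι}
    (hf : ∀ j ∈ t, DependsOn (f j) B) : DependsOn (fun s ↦ ∑ j ∈ t, f j s) B :=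
  fun _ _ hss' ↦ sum_congr rfl fun j hj ↦ hf j hj hss'

/-- `P` is an exact potential of the game with payoff functions `θ`: a unilateral deviation
changes `P` by exactly the change in the deviating player's payoff. Payoffs may take values in
any type with a subtraction. -/
def IsExactPotential [DecidableEq ι] [Sub M] (P : (∀ i, S i) → M) (θ : ι → (∀ i, S i) → M) :
    Prop :=
  ∀ (i : ι) (s : ∀ i, S i) (x : S i), P (update s i x) - P s = θ i (update s i x) - θ i s

lemma isExactPotential_iff_dependsOn_sub [DecidableEq ι] [AddCommGroup M]
    {P : (∀ i, S i) → M} {θ : ι → (∀ i, S i) → M} :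
    IsExactPotential P θ ↔ ∀ i, DependsOn (P - θ i) {i}ᶜ := by
  simp only [IsExactPotential, dependsOn_compl_singleton_iff, Pi.sub_apply,
    sub_eq_sub_iff_sub_eq_sub]

theorem stmt_7_general [DecidableEq ι] [AddCommGroup M] (t : Finset J) (A : J → Set ι)
    [∀ (i : ι) (j : J), Decidable (i ∈ A j)] (f : J → (∀ i, S i) → M)
    (hdep : ∀ j ∈ t, DependsOn (f j) (A j))
    (P : (∀ i, S i) → M) (θ : ι → (∀ i, S i) → M)
    (hP : ∀ s, P s = ∑ j ∈ t, f j s) (hθ : ∀ i s, θ i s = ∑ j ∈ t with i ∈ A j, f j s) :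
    IsExactPotential P θ := by
  refine isExactPotential_iff_dependsOn_sub.2 fun i ↦ ?_
  have hsub : P - θ i = fun s ↦ ∑ j ∈ t with i ∉ A j, f j s := by
    ext s
    rw [Pi.sub_apply, hP, hθ, sub_eq_iff_eq_add', sum_filter_add_sum_filter_not]
  rw [hsub]
  refine dependsOn_sum fun j hj ↦ ?_
  obtain ⟨hjt, hij⟩ := mem_filter.1 hj
  exact (hdep j hjt).mono (Set.subset_compl_singleton_iff.2 hij)

end ExactPotential

/-- If the global objective is a sum of local terms, each depending only on the
players in `A j`, and each player's local profit collects exactly the terms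
involving that player, then the exact potential equality holds. -/
theorem stmt_7 {ι J : Type*} [Fintype ι] [Fintype J] [DecidableEq ι]
    {S : ι → Type*} (A : J → Set ι) [∀ (i : ι) (j : J), Decidable (i ∈ A j)]
    (f : J → (∀ i, S i) → ℝ)
    (hdep : ∀ (j : J) (s s' : ∀ i, S i), (∀ i ∈ A j, s i = s' i) → f j s = f j s')
    (P : (∀ i, S i) → ℝ) (θ : ι → (∀ i, S i) → ℝ)
    (hP : ∀ s : ∀ i, S i, P s = ∑ j : J, f j s)
    (hθ : ∀ (i : ι) (s : ∀ i, S i),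
      θ i s = ∑ j ∈ Finset.univ.filter (fun j : J => i ∈ A j), f j s) :
    ∀ (i : ι) (s : ∀ i, S i) (x : S i),
      P (Function.update s i x) - P s =
        θ i (Function.update s i x) - θ i s :=
  stmt_7_general univ A f (fun j _ s s' ↦ hdep j s s') P θ hP hθ
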